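/- Let $(B_0,B_1)$ be a Banach couple satisfying Persson's approximation condition (H), and let $(A_0,A_1)$ be a Banach couple with $A_0\subset A_1$. Let $T:A_1\to B_1$ satisfy: $T(A_0)\subset B_0$ with $\|Ta\|_{B_0}\le C_0\|a\|_{A_0}$ for all $a\in A_0$; $\|Ta-Ta'\|_{B_1}\le C_1\|a-a'\|_{A_1}$ for all $a,a'\in A_1$; and there exists a compact subset $K\subset B_0$ with $Ta\in\|a\|_{A_0}K$ for each $a\in A_0$. Then for each $\theta\in(0,1)$ and $p\in[1,\infty]$, $T$ maps every bounded subset of $(A_0,A_1)_{\theta,p}$ to a relatively compact subset of $(B_0,B_1)_{\theta,p}$. -/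

import Mathlib

open scoped ENNReal
open Filter Topology MeasureTheory

/-- A member of a Banach couple, modeled as an extended-real-valued norm on a common
ambient real vector space `X`; the space itself is `{x | N x < ∞}`.  The `complete`
field expresses that this space is a Banach space. -/
structure CoupleNorm (X : Type*) [AddCommGroup X] [Module ℝ X] where
  N : X → ℝ≥0∞
  zero : N 0 = 0
  add_le : ∀ x y, N (x + y) ≤ N x + N y
  smul_eq : ∀ (c : ℝ) (x : X), N (c • x) = ENNReal.ofReal |c| * N x
  definite : ∀ x, N x = 0 → x = 0
  complete : ∀ u : ℕ → X, (∀ n, N (u n) < ∞) →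
    (∀ ε : ℝ≥0∞, 0 < ε → ∃ n0, ∀ m n, n0 ≤ m → n0 ≤ n → N (u m - u n) < ε) →
    ∃ x, Tendsto (fun n => N (u n - x)) atTop (𝓝 0)

namespace CoupleNorm

variable {X : Type*} [AddCommGroup X] [Module ℝ X]

/-- The Peetre K-functional of the couple `(N0, N1)`. -/
noncomputable def Kfun (N0 N1 : CoupleNorm X) (t : ℝ) (x : X) : ℝ≥0∞ :=
  ⨅ y : X, N0.N y + ENNReal.ofReal t * N1.N (x - y)

/-- The measure dt/t on (0,∞). -/
noncomputable def haarMeas : Measure ℝ :=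
  (volume.restrict (Set.Ioi (0 : ℝ))).withDensity fun t => ENNReal.ofReal t⁻¹

/-- The real interpolation norm `(θ, p)`, for `p ∈ [1,∞]`, as an extended real. -/
noncomputable def interpNorm (N0 N1 : CoupleNorm X) (θ : ℝ) (p : ℝ≥0∞) (x : X) : ℝ≥0∞ :=
  if p = ∞ then ⨆ t : {t : ℝ // 0 < t}, (ENNReal.ofReal t.1) ^ (-θ) * Kfun N0 N1 t.1 x
  else (∫⁻ t, ((ENNReal.ofReal t) ^ (-θ) * Kfun N0 N1 t x) ^ p.toReal ∂haarMeas) ^ (1 / p.toReal)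

/-- `N0 ⊂ N1`: continuous embedding (the inclusion of domains is then automatic). -/
def Embeds (N0 N1 : CoupleNorm X) : Prop :=
  ∃ c : ℝ, 0 < c ∧ ∀ x, N1.N x ≤ ENNReal.ofReal c * N0.N x

/-- A set bounded with respect to a generalized norm. -/
def BddWith (NN : X → ℝ≥0∞) (S : Set X) : Prop :=
  ∃ R : ℝ, ∀ x ∈ S, NN x ≤ ENNReal.ofReal R

/-- Sequential relative compactness with respect to a generalized norm. -/
def RelCompactWith (NN : X → ℝ≥0∞) (S : Set X) : Prop :=
  ∀ u : ℕ → X, (∀ n, u n ∈ S) →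
    ∃ (σ : ℕ → ℕ) (x : X), StrictMono σ ∧
      Tendsto (fun n => NN (u (σ n) - x)) atTop (𝓝 0)

/-- Sequential compactness (with limits inside the set) w.r.t. a generalized norm. -/
def CompactWith (NN : X → ℝ≥0∞) (S : Set X) : Prop :=
  ∀ u : ℕ → X, (∀ n, u n ∈ S) →
    ∃ x ∈ S, ∃ σ : ℕ → ℕ, StrictMono σ ∧
      Tendsto (fun n => NN (u (σ n) - x)) atTop (𝓝 0)

end CoupleNorm

/-- Persson's approximation condition (H) for the couple `(B0, B1)`. -/
def PerssonH {Y : Type*} [AddCommGroup Y] [Module ℝ Y] (B0 B1 : CoupleNorm Y) : Prop :=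
  ∀ K : Set Y, K ⊆ {b | B0.N b < ∞} → CoupleNorm.CompactWith B0.N K →
    ∃ c : ℝ, 0 < c ∧ ∀ ε : ℝ, 0 < ε → ∃ P : Y →ₗ[ℝ] Y,
      (∀ b : Y, (B0.N b < ∞ ∨ B1.N b < ∞) → B0.N (P b) < ∞ ∧ B1.N (P b) < ∞) ∧
      (∀ b : Y, B0.N (P b) ≤ ENNReal.ofReal c * B0.N b) ∧
      (∀ b : Y, B1.N (P b) ≤ ENNReal.ofReal c * B1.N b) ∧
      (∀ b ∈ K, B0.N (P b - b) < ENNReal.ofReal ε)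


namespace CoupleNorm

noncomputable def Phi (θ : ℝ) (p : ℝ≥0∞) (f : ℝ → ℝ≥0∞) : ℝ≥0∞ :=
  if p = ∞ then ⨆ t : {t : ℝ // 0 < t}, (ENNReal.ofReal t.1) ^ (-θ) * f t.1
  else (∫⁻ t, ((ENNReal.ofReal t) ^ (-θ) * f t) ^ p.toReal ∂haarMeas) ^ (1 / p.toReal)

lemma haar_pos : ∀ᵐ t ∂haarMeas, 0 < t := by
  have h : ∀ᵐ t ∂(volume.restrict (Set.Ioi (0 : ℝ))), t ∈ Set.Ioi (0:ℝ) :=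
    ae_restrict_mem measurableSet_Ioi
  exact (withDensity_absolutelyContinuous _ _).ae_le h

lemma p_pos {p : ℝ≥0∞} (hp : 1 ≤ p) (hpt : p ≠ ∞) : 1 ≤ p.toReal := by
  have := ENNReal.toReal_mono hpt hp
  simpa using this

lemma Phi_mono {θ : ℝ} {p : ℝ≥0∞} {f g : ℝ → ℝ≥0∞} (h : ∀ t, 0 < t → f t ≤ g t) :
    Phi θ p f ≤ Phi θ p g := by
  unfold Phi
  split_ifs with hp
  · exact iSup_mono fun t => mul_le_mul_right (h t.1 t.2) _
  · refine ENNReal.rpow_le_rpow (lintegral_mono_ae ?_) (by positivity)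
    filter_upwards [haar_pos] with t ht
    exact ENNReal.rpow_le_rpow (mul_le_mul_right (h t ht) _) (by positivity)

lemma meas_w (θ : ℝ) {f : ℝ → ℝ≥0∞} (hf : Measurable f) :
    Measurable fun t : ℝ => (ENNReal.ofReal t) ^ (-θ) * f t :=
  (ENNReal.measurable_ofReal.pow_const _).mul hf

lemma Phi_add {θ : ℝ} {p : ℝ≥0∞} (hp : 1 ≤ p) {f g : ℝ → ℝ≥0∞} (hf : Measurable f)
    (hg : Measurable g) : Phi θ p (fun t => f t + g t) ≤ Phi θ p f + Phi θ p g := by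
  unfold Phi
  split_ifs with hpt
  · refine iSup_le fun t => ?_
    rw [mul_add]
    exact add_le_add (le_iSup (fun t : {t : ℝ // 0 < t} => (ENNReal.ofReal t.1) ^ (-θ) * f t.1) t)
      (le_iSup (fun t : {t : ℝ // 0 < t} => (ENNReal.ofReal t.1) ^ (-θ) * g t.1) t)
  · have := ENNReal.lintegral_Lp_add_le (μ := haarMeas) (meas_w θ hf).aemeasurable
      (meas_w θ hg).aemeasurable (p_pos hp hpt)
    simpa only [Pi.add_apply, mul_add] using this

lemma Phi_const_mul {θ : ℝ} {p : ℝ≥0∞} (hp : 1 ≤ p) {f : ℝ → ℝ≥0∞} (hf : Measurable f)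
    (c : ℝ≥0∞) : Phi θ p (fun t => c * f t) ≤ c * Phi θ p f := by
  unfold Phi
  split_ifs with hpt
  · rw [ENNReal.mul_iSup]
    exact iSup_mono fun t => by rw [mul_left_comm]
  · have h1 := p_pos hp hpt
    have : ∀ t, (ENNReal.ofReal t ^ (-θ) * (c * f t)) ^ p.toReal
        = c ^ p.toReal * (ENNReal.ofReal t ^ (-θ) * f t) ^ p.toReal := fun t => by
      rw [mul_left_comm, ENNReal.mul_rpow_of_nonneg _ _ (by positivity)]
    simp_rw [this]
    rw [lintegral_const_mul _ ((meas_w θ hf).pow_const _),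
      ENNReal.mul_rpow_of_nonneg _ _ (by positivity), ← ENNReal.rpow_mul,
      mul_one_div_cancel (by positivity), ENNReal.rpow_one]

lemma haar_scale {f : ℝ → ℝ≥0∞} (hf : Measurable f) {l : ℝ} (hl : 0 < l) :
    ∫⁻ t, f (l * t) ∂haarMeas = ∫⁻ t, f t ∂haarMeas := by
  unfold haarMeas
  have hm : Measurable fun t : ℝ => ENNReal.ofReal t⁻¹ :=
    ENNReal.measurable_ofReal.comp measurable_inv
  have hfl : Measurable fun t => f (l * t) := hf.comp (measurable_const_mul l)
  rw [lintegral_withDensity_eq_lintegral_mul _ hm hf,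
    lintegral_withDensity_eq_lintegral_mul _ hm hfl, ← lintegral_indicator measurableSet_Ioi,
    ← lintegral_indicator measurableSet_Ioi]
  set g := (Set.Ioi (0:ℝ)).indicator ((fun t : ℝ => ENNReal.ofReal t⁻¹) * f) with hg
  have hgm : Measurable g := (hm.mul hf).indicator measurableSet_Ioi
  have h1 : ∀ t, (Set.Ioi (0:ℝ)).indicator ((fun t : ℝ => ENNReal.ofReal t⁻¹) * fun t => f (l * t)) t
      = ENNReal.ofReal l * g (l * t) := by
    intro t
    by_cases ht : 0 < t
    · have : 0 < l * t := by positivity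
      rw [hg, Set.indicator_of_mem (Set.mem_Ioi.2 ht), Set.indicator_of_mem (Set.mem_Ioi.2 this)]
      simp only [Pi.mul_apply]
      rw [← mul_assoc, ← ENNReal.ofReal_mul hl.le]
      congr 2
      field_simp
    · have : ¬ 0 < l * t := fun h => ht (by nlinarith)
      rw [hg, Set.indicator_of_notMem (by simpa using ht),
        Set.indicator_of_notMem (by simpa using this)]
      simp
  simp_rw [h1]
  have hgl : Measurable fun t => g (l * t) := hgm.comp (measurable_const_mul l)
  rw [lintegral_const_mul _ hgl,
    ← lintegral_map hgm (measurable_const_mul l), Real.map_volume_mul_left hl.ne',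
    lintegral_smul_measure, smul_eq_mul, ← mul_assoc, ← ENNReal.ofReal_mul hl.le,
    abs_of_pos (inv_pos.2 hl), mul_inv_cancel₀ hl.ne']
  simp

lemma Phi_scale {θ : ℝ} {p : ℝ≥0∞} (hp : 1 ≤ p) {f : ℝ → ℝ≥0∞} (hf : Measurable f)
    {l : ℝ} (hl : 0 < l) :
    Phi θ p (fun t => f (l * t)) ≤ ENNReal.ofReal l ^ θ * Phi θ p f := by
  have key : ∀ t, 0 < t → ENNReal.ofReal t ^ (-θ) * f (l * t) =
      ENNReal.ofReal l ^ θ * (ENNReal.ofReal (l * t) ^ (-θ) * f (l * t)) := by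
    intro t ht
    rw [← mul_assoc, ENNReal.ofReal_mul hl.le, ENNReal.mul_rpow_of_ne_top (by simp) (by simp),
      ← mul_assoc, ← ENNReal.rpow_add _ _ (by simpa using hl) (by simp)]
    simp
  unfold Phi
  split_ifs with hpt
  · refine iSup_le fun t => ?_
    rw [key _ t.2]
    refine mul_le_mul_right ?_ _
    exact le_iSup (fun t : {t : ℝ // 0 < t} => (ENNReal.ofReal t.1) ^ (-θ) * f t.1)
      ⟨l * t.1, mul_pos hl t.2⟩
  · have h1 := p_pos hp hpt
    have h2 : ∫⁻ t, (ENNReal.ofReal t ^ (-θ) * f (l * t)) ^ p.toReal ∂haarMeas =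
        ∫⁻ t, (ENNReal.ofReal l ^ θ) ^ p.toReal *
          (ENNReal.ofReal (l * t) ^ (-θ) * f (l * t)) ^ p.toReal ∂haarMeas := by
      refine lintegral_congr_ae ?_
      filter_upwards [haar_pos] with t ht
      rw [key t ht, ENNReal.mul_rpow_of_nonneg _ _ (by positivity)]
    have hm : Measurable fun t => (ENNReal.ofReal t ^ (-θ) * f t) ^ p.toReal :=
      (meas_w θ hf).pow_const _
    have hml : Measurable fun t => (ENNReal.ofReal (l * t) ^ (-θ) * f (l * t)) ^ p.toReal :=
      hm.comp (measurable_const_mul l)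
    rw [h2, lintegral_const_mul _ hml, haar_scale hm hl,
      ENNReal.mul_rpow_of_nonneg _ _ (by positivity), ← ENNReal.rpow_mul (_ ^ θ),
      mul_one_div_cancel (by positivity), ENNReal.rpow_one]

lemma Phi_fatou {θ : ℝ} {p : ℝ≥0∞} (hp : 1 ≤ p) {f : ℝ → ℝ≥0∞} {g : ℕ → ℝ → ℝ≥0∞}
    (hg : ∀ n, Measurable (g n)) (h : ∀ t, 0 < t → f t ≤ liminf (fun n => g n t) atTop)
    {e : ℝ≥0∞} (he : ∀ᶠ n in atTop, Phi θ p (g n) ≤ e) : Phi θ p f ≤ e := by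
  have mapl : ∀ (φ : ℝ≥0∞ → ℝ≥0∞), Monotone φ → Continuous φ → ∀ u : ℕ → ℝ≥0∞,
      φ (liminf u atTop) = liminf (fun n => φ (u n)) atTop := fun φ h1 h2 u =>
    h1.map_liminf_of_continuousAt u h2.continuousAt
  have hw : ∀ t : ℝ, 0 < t → ENNReal.ofReal t ^ (-θ) ≠ ∞ := fun t ht =>
    ENNReal.rpow_ne_top_of_ne_zero (by simpa using ht) (by simp)
  unfold Phi at *
  split_ifs at * with hpt
  · refine iSup_le fun t => ?_
    refine (mul_le_mul_right (h t.1 t.2) _).trans ?_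
    rw [mapl (fun x => ENNReal.ofReal t.1 ^ (-θ) * x) (fun a b h => mul_le_mul_right h _)
      (ENNReal.continuous_const_mul (hw t.1 t.2))]
    refine liminf_le_of_frequently_le' (Eventually.frequently ?_)
    filter_upwards [he] with n hn
    exact (le_iSup (fun t : {t : ℝ // 0 < t} => (ENNReal.ofReal t.1) ^ (-θ) * g n t.1) t).trans hn
  · have h1 := p_pos hp hpt
    have h2 : ∫⁻ t, (ENNReal.ofReal t ^ (-θ) * f t) ^ p.toReal ∂haarMeas ≤
        ∫⁻ t, liminf (fun n => (ENNReal.ofReal t ^ (-θ) * g n t) ^ p.toReal) atTop ∂haarMeas := by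
      refine lintegral_mono_ae ?_
      filter_upwards [haar_pos] with t ht
      rw [← mapl (fun x => (ENNReal.ofReal t ^ (-θ) * x) ^ p.toReal)
        (fun a b h => ENNReal.rpow_le_rpow (mul_le_mul_right h _) (by positivity))
        ((ENNReal.continuous_rpow_const).comp (ENNReal.continuous_const_mul (hw t ht)))]
      exact ENNReal.rpow_le_rpow (mul_le_mul_right (h t ht) _) (by positivity)
    have h3 := h2.trans (lintegral_liminf_le fun n => (meas_w θ (hg n)).pow_const _)
    have h4 : liminf (fun n => ∫⁻ t, (ENNReal.ofReal t ^ (-θ) * g n t) ^ p.toReal ∂haarMeas) atTop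
        ≤ e ^ p.toReal := by
      refine liminf_le_of_frequently_le' (Eventually.frequently ?_)
      filter_upwards [he] with n hn
      have := ENNReal.rpow_le_rpow hn (z := p.toReal) (by positivity)
      rwa [← ENNReal.rpow_mul, one_div_mul_cancel (by positivity), ENNReal.rpow_one] at this
    have := ENNReal.rpow_le_rpow (h3.trans h4) (z := 1 / p.toReal) (by positivity)
    rwa [← ENNReal.rpow_mul e, mul_one_div_cancel (by positivity), ENNReal.rpow_one] at this

lemma haar_Icc {t : ℝ} (ht : 0 < t) : ENNReal.ofReal (1/2) ≤ haarMeas (Set.Icc t (2*t)) := by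
  unfold haarMeas
  rw [withDensity_apply _ measurableSet_Icc, Measure.restrict_restrict measurableSet_Icc]
  have hs : Set.Icc t (2*t) ∩ Set.Ioi 0 = Set.Icc t (2*t) := by
    ext x; simp only [Set.mem_inter_iff, Set.mem_Icc, Set.mem_Ioi]
    constructor
    · exact fun h => h.1
    · exact fun h => ⟨h, by linarith [h.1]⟩
  rw [hs]
  calc ENNReal.ofReal (1/2) = ENNReal.ofReal (2*t)⁻¹ * volume (Set.Icc t (2*t)) := by
        rw [Real.volume_Icc, ← ENNReal.ofReal_mul (by positivity)]
        congr 1; field_simp; ring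
    _ = ∫⁻ _ in Set.Icc t (2*t), ENNReal.ofReal (2*t)⁻¹ := by rw [setLIntegral_const]
    _ ≤ _ := by
        refine setLIntegral_mono' measurableSet_Icc fun x hx => ?_
        refine ENNReal.ofReal_le_ofReal ?_
        have : 0 < x := by linarith [hx.1]
        exact inv_anti₀ this hx.2

lemma Phi_lower {θ : ℝ} (h0 : 0 < θ) (h1 : θ < 1) {p : ℝ≥0∞} (hp : 1 ≤ p) {f : ℝ → ℝ≥0∞}
    (hf : Monotone f) {t : ℝ} (ht : 0 < t) :
    f t ≤ ENNReal.ofReal (4 * t ^ θ) * Phi θ p f := by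
  have hE : ∀ s : ℝ, 0 < s → f t ≤ ENNReal.ofReal (s ^ θ) * (ENNReal.ofReal s ^ (-θ) * f t) := by
    intro s hs
    rw [← ENNReal.ofReal_rpow_of_pos hs, ← mul_assoc,
      ← ENNReal.rpow_add _ _ (by simpa using hs) (by simp)]
    simp
  unfold Phi
  split_ifs with hpt
  · refine (hE t ht).trans ?_
    refine mul_le_mul' (ENNReal.ofReal_le_ofReal ?_) ?_
    · have := Real.rpow_nonneg ht.le θ
      linarith
    exact le_iSup (fun t : {t : ℝ // 0 < t} => (ENNReal.ofReal t.1) ^ (-θ) * f t.1) ⟨t, ht⟩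
  · have hq := p_pos hp hpt
    set q := p.toReal
    have h2t : 0 < 2 * t := by positivity
    set c := ENNReal.ofReal (2*t) ^ (-θ) * f t with hc
    have step : c ^ q * ENNReal.ofReal (1/2) ≤
        ∫⁻ t, (ENNReal.ofReal t ^ (-θ) * f t) ^ q ∂haarMeas := by
      calc c ^ q * ENNReal.ofReal (1/2) ≤ c ^ q * haarMeas (Set.Icc t (2*t)) :=
            mul_le_mul_right (haar_Icc ht) _
        _ = ∫⁻ _ in Set.Icc t (2*t), c ^ q ∂haarMeas := by rw [setLIntegral_const]
        _ ≤ ∫⁻ s in Set.Icc t (2*t), (ENNReal.ofReal s ^ (-θ) * f s) ^ q ∂haarMeas := by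
            refine setLIntegral_mono' measurableSet_Icc fun x hx => ?_
            refine ENNReal.rpow_le_rpow (mul_le_mul' ?_ (hf hx.1)) (by positivity)
            rw [ENNReal.rpow_neg, ENNReal.rpow_neg]
            exact ENNReal.inv_le_inv.2 (ENNReal.rpow_le_rpow (ENNReal.ofReal_le_ofReal hx.2) h0.le)
        _ ≤ _ := setLIntegral_le_lintegral _ _
    have step2 := ENNReal.rpow_le_rpow step (z := 1 / q) (by positivity)
    rw [ENNReal.mul_rpow_of_nonneg _ _ (by positivity), ← ENNReal.rpow_mul c,
      mul_one_div_cancel (by positivity), ENNReal.rpow_one] at step2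
    have hhalf : ENNReal.ofReal (1/2) ≤ ENNReal.ofReal (1/2) ^ (1/q) := by
      conv_lhs => rw [← ENNReal.rpow_one (ENNReal.ofReal (1/2))]
      refine ENNReal.rpow_le_rpow_of_exponent_ge ?_ ?_
      · rw [← ENNReal.ofReal_one]; exact ENNReal.ofReal_le_ofReal (by norm_num)
      · rw [div_le_one (by positivity)]; exact hq
    have step3 := (mul_le_mul_right hhalf c).trans step2
    have h2 : c ≤ ENNReal.ofReal 2 * (c * ENNReal.ofReal (1/2)) := by
      rw [mul_left_comm, ← ENNReal.ofReal_mul (by norm_num)]; norm_num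
    calc f t ≤ ENNReal.ofReal ((2*t)^θ) * c := hE _ h2t
      _ ≤ ENNReal.ofReal ((2*t)^θ) * (ENNReal.ofReal 2 * (c * ENNReal.ofReal (1/2))) :=
          mul_le_mul_right h2 _
      _ ≤ ENNReal.ofReal (2 * t^θ) * (ENNReal.ofReal 2 * _) := by
          refine mul_le_mul' (ENNReal.ofReal_le_ofReal ?_) (mul_le_mul_right step3 _)
          rw [Real.mul_rpow (by norm_num) ht.le]
          refine mul_le_mul_of_nonneg_right ?_ (by positivity)
          calc (2:ℝ)^θ ≤ 2^(1:ℝ) := Real.rpow_le_rpow_of_exponent_le (by norm_num) h1.le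
            _ = 2 := by simp
      _ = _ := by
          rw [← mul_assoc, ← ENNReal.ofReal_mul (by positivity)]
          congr 2; ring

lemma Phi_min {θ : ℝ} (h0 : 0 < θ) (h1 : θ < 1) {p : ℝ≥0∞} (hp : 1 ≤ p) :
    Phi θ p (fun t => ENNReal.ofReal (min 1 t)) < ∞ := by
  have e1 : ∀ t : ℝ, 0 < t → ENNReal.ofReal t ^ (-θ) * ENNReal.ofReal (min 1 t)
      = ENNReal.ofReal (t ^ (-θ) * min 1 t) := fun t ht => by
    rw [ENNReal.ofReal_rpow_of_pos ht, ← ENNReal.ofReal_mul (by positivity)]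
  unfold Phi
  split_ifs with hpt
  · refine lt_of_le_of_lt (iSup_le fun t => ?_) ENNReal.one_lt_top
    obtain ⟨t, ht⟩ := t
    simp only
    rw [e1 t ht, ← ENNReal.ofReal_one]
    refine ENNReal.ofReal_le_ofReal ?_
    rcases le_total t 1 with h | h
    · rw [min_eq_right h]
      nth_rewrite 2 [← Real.rpow_one t]
      rw [← Real.rpow_add ht]
      exact Real.rpow_le_one ht.le h (by linarith)
    · rw [min_eq_left h, mul_one]
      exact Real.rpow_le_one_of_one_le_of_nonpos h (by linarith)
  · have hq := p_pos hp hpt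
    set q := p.toReal
    refine ENNReal.rpow_lt_top_of_nonneg (by positivity) ?_
    have hm : Measurable fun t : ℝ => ENNReal.ofReal t⁻¹ :=
      ENNReal.measurable_ofReal.comp measurable_inv
    unfold haarMeas
    rw [lintegral_withDensity_eq_lintegral_mul _ hm ((meas_w θ (by fun_prop)).pow_const _)]
    have hsplit : Set.Ioi (0:ℝ) = Set.Ioc 0 1 ∪ Set.Ioi 1 := by
      rw [Set.Ioc_union_Ioi_eq_Ioi]; norm_num
    rw [hsplit]
    refine ne_top_of_le_ne_top ?_ (lintegral_union_le _ _ _)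
    refine ENNReal.add_ne_top.2 ⟨?_, ?_⟩
    · have hi : IntegrableOn (fun t : ℝ => t ^ ((1-θ)*q - 1)) (Set.Ioc 0 1) := by
        rw [← intervalIntegrable_iff_integrableOn_Ioc_of_le (by norm_num)]
        refine intervalIntegral.intervalIntegrable_rpow' ?_
        have : 0 < (1-θ)*q := mul_pos (by linarith) (by linarith)
        linarith
      refine ne_top_of_le_ne_top hi.lintegral_lt_top.ne ?_
      refine setLIntegral_mono' measurableSet_Ioc fun t ht => ?_
      simp only [Pi.mul_apply]
      rw [e1 t ht.1, ENNReal.ofReal_rpow_of_nonneg (mul_nonneg (Real.rpow_nonneg ht.1.le _)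
        (le_min (by norm_num) ht.1.le)) (by positivity), ← ENNReal.ofReal_mul (inv_nonneg.2 ht.1.le)]
      refine ENNReal.ofReal_le_ofReal (le_of_eq ?_)
      rw [min_eq_right ht.2]
      nth_rewrite 3 [← Real.rpow_one t]
      rw [← Real.rpow_add ht.1, ← Real.rpow_mul ht.1.le, ← Real.rpow_neg_one, ← Real.rpow_add ht.1]
      congr 1; ring
    · have hi : IntegrableOn (fun t : ℝ => t ^ (-θ*q - 1)) (Set.Ioi 1) := by
        refine integrableOn_Ioi_rpow_of_lt ?_ (by norm_num)
        have : 0 < θ*q := mul_pos (by linarith) (by linarith)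
        linarith
      refine ne_top_of_le_ne_top hi.lintegral_lt_top.ne ?_
      refine setLIntegral_mono' measurableSet_Ioi fun t ht => ?_
      have ht' : 1 < t := ht
      have h0t : 0 < t := by linarith
      simp only [Pi.mul_apply]
      rw [e1 t h0t, ENNReal.ofReal_rpow_of_nonneg (mul_nonneg (Real.rpow_nonneg h0t.le _)
        (le_min (by norm_num) h0t.le)) (by positivity), ← ENNReal.ofReal_mul (inv_nonneg.2 h0t.le)]
      refine ENNReal.ofReal_le_ofReal (le_of_eq ?_)
      rw [min_eq_left ht'.le, mul_one, ← Real.rpow_mul h0t.le, ← Real.rpow_neg_one,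
        ← Real.rpow_add h0t]
      congr 1; ring

end CoupleNorm

namespace CoupleNorm

section basics
variable {X : Type*} [AddCommGroup X] [Module ℝ X]

lemma N_neg (N : CoupleNorm X) (x : X) : N.N (-x) = N.N x := by
  have := N.smul_eq (-1) x
  simpa using this

lemma N_sub_comm (N : CoupleNorm X) (x y : X) : N.N (x - y) = N.N (y - x) := by
  rw [← N_neg, neg_sub]

lemma N_sub_le (N : CoupleNorm X) (x y : X) : N.N (x - y) ≤ N.N x + N.N y := by
  rw [sub_eq_add_neg, ← N_neg N y]; exact N.add_le _ _

lemma K_mono (N0 N1 : CoupleNorm X) (x : X) : Monotone fun t => Kfun N0 N1 t x := by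
  intro s t h
  exact iInf_mono fun y => add_le_add le_rfl (mul_le_mul_left (ENNReal.ofReal_le_ofReal h) _)

lemma K_meas (N0 N1 : CoupleNorm X) (x : X) : Measurable fun t => Kfun N0 N1 t x :=
  (K_mono N0 N1 x).measurable

lemma K_le (N0 N1 : CoupleNorm X) (t : ℝ) (x y : X) :
    Kfun N0 N1 t x ≤ N0.N y + ENNReal.ofReal t * N1.N (x - y) := iInf_le _ y

lemma K_le0 (N0 N1 : CoupleNorm X) (t : ℝ) (x : X) : Kfun N0 N1 t x ≤ N0.N x := by
  simpa [N1.zero] using K_le N0 N1 t x x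

lemma K_le1 (N0 N1 : CoupleNorm X) (t : ℝ) (x : X) :
    Kfun N0 N1 t x ≤ ENNReal.ofReal t * N1.N x := by
  simpa [N0.zero] using K_le N0 N1 t x 0

lemma K_add (N0 N1 : CoupleNorm X) (t : ℝ) (x x' : X) :
    Kfun N0 N1 t (x + x') ≤ Kfun N0 N1 t x + Kfun N0 N1 t x' := by
  unfold Kfun
  refine ENNReal.le_iInf_add_iInf ?_
  intro y y'
  refine (iInf_le _ (y + y')).trans ?_
  rw [show x + x' - (y + y') = (x - y) + (x' - y') by abel]
  calc _ ≤ (N0.N y + N0.N y') + ENNReal.ofReal t * (N1.N (x - y) + N1.N (x' - y')) :=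
        add_le_add (N0.add_le _ _) (mul_le_mul_right (N1.add_le _ _) _)
    _ = _ := by rw [mul_add]; abel

lemma K_smul_le (N0 N1 : CoupleNorm X) (t : ℝ) (c : ℝ) (x : X) :
    Kfun N0 N1 t (c • x) ≤ ENNReal.ofReal |c| * Kfun N0 N1 t x := by
  unfold Kfun
  rw [ENNReal.mul_iInf (by simp)]
  · refine le_iInf fun y => (iInf_le _ (c • y)).trans ?_
    rw [← smul_sub, N0.smul_eq, N1.smul_eq, mul_add, mul_left_comm]

lemma K_neg (N0 N1 : CoupleNorm X) (t : ℝ) (x : X) : Kfun N0 N1 t (-x) = Kfun N0 N1 t x := by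
  have h : ∀ x, Kfun N0 N1 t (-x) ≤ Kfun N0 N1 t x := fun x => by
    simpa using K_smul_le N0 N1 t (-1) x
  exact le_antisymm (h x) (by simpa using h (-x))

lemma K_zero (N0 N1 : CoupleNorm X) (t : ℝ) : Kfun N0 N1 t 0 = 0 := by
  have := K_le0 N0 N1 t 0
  simpa [N0.zero] using this

lemma K_le_one (N0 N1 : CoupleNorm X) (t : ℝ) (x : X) :
    Kfun N0 N1 t x ≤ ENNReal.ofReal (max 1 t) * Kfun N0 N1 1 x := by
  unfold Kfun
  rw [ENNReal.mul_iInf_of_ne (by simp) (by simp)]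
  refine iInf_mono fun y => ?_
  rw [mul_add]
  refine add_le_add ?_ ?_
  · conv_lhs => rw [← one_mul (N0.N y)]
    refine mul_le_mul_left ?_ _
    rw [← ENNReal.ofReal_one]; exact ENNReal.ofReal_le_ofReal (le_max_left _ _)
  · simp only [ENNReal.ofReal_one, one_mul]
    exact mul_le_mul_left (ENNReal.ofReal_le_ofReal (le_max_right _ _)) _

/-- The finite part. -/
def fin (N : CoupleNorm X) : Submodule ℝ X where
  carrier := {x | N.N x < ∞}
  add_mem' := fun {a b} ha hb => lt_of_le_of_lt (N.add_le a b) (ENNReal.add_lt_top.2 ⟨ha, hb⟩)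
  zero_mem' := by simp [N.zero]
  smul_mem' := fun c x hx => by
    simp only [Set.mem_ofPred_eq] at *
    rw [N.smul_eq]; exact ENNReal.mul_lt_top (by simp) hx

lemma fin_lt (N : CoupleNorm X) (x : fin N) : N.N x < ∞ := x.2

noncomputable instance finGrp (N : CoupleNorm X) : NormedAddCommGroup (fin N) :=
  AddGroupNorm.toNormedAddCommGroup
    { toFun := fun x => (N.N x).toReal
      map_zero' := by simp [N.zero]
      add_le' := fun x y => by
        rw [← ENNReal.toReal_add (fin_lt N x).ne (fin_lt N y).ne]
        exact ENNReal.toReal_mono (ENNReal.add_ne_top.2 ⟨(fin_lt N x).ne, (fin_lt N y).ne⟩)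
          (N.add_le _ _)
      neg' := fun x => by simp [N_neg]
      eq_zero_of_map_eq_zero' := fun x hx => by
        rcases (ENNReal.toReal_eq_zero_iff _).1 hx with h | h
        · exact Subtype.ext (N.definite _ h)
        · exact absurd h (fin_lt N x).ne }

lemma fin_norm (N : CoupleNorm X) (x : fin N) : ‖x‖ = (N.N x).toReal := rfl

lemma fin_ofReal (N : CoupleNorm X) (x : fin N) : ENNReal.ofReal ‖x‖ = N.N x := by
  rw [fin_norm, ENNReal.ofReal_toReal (fin_lt N x).ne]

noncomputable instance finSpace (N : CoupleNorm X) : NormedSpace ℝ (fin N) where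
  norm_smul_le := fun c x => by
    rw [fin_norm, fin_norm]
    simp [N.smul_eq]

lemma fin_edist (N : CoupleNorm X) (x y : fin N) : edist x y = N.N ((x : X) - y) := by
  rw [edist_dist, dist_eq_norm, fin_ofReal]; rfl

instance finComplete (N : CoupleNorm X) : CompleteSpace (fin N) := by
  refine EMetric.complete_of_cauchySeq_tendsto fun u hu => ?_
  rw [EMetric.cauchySeq_iff] at hu
  obtain ⟨x, hx⟩ := N.complete (fun n => u n) (fun n => fin_lt N _) (fun ε hε => by
    obtain ⟨n0, h⟩ := hu ε hε
    exact ⟨n0, fun m n hm hn => by rw [← fin_edist]; exact h m hm n hn⟩)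
  have hxf : x ∈ fin N := by
    obtain ⟨n, hn⟩ := (hx.eventually (gt_mem_nhds (zero_lt_one (α := ℝ≥0∞)))).exists
    have : x = u n - (u n - x) := by abel
    change N.N x < ∞
    rw [this]
    exact lt_of_le_of_lt (N_sub_le N _ _)
      (ENNReal.add_lt_top.2 ⟨fin_lt N _, hn.trans ENNReal.one_lt_top⟩)
  refine ⟨⟨x, hxf⟩, ?_⟩
  rw [tendsto_iff_edist_tendsto_0]
  simpa only [fin_edist] using hx

/-- closed graph argument modulo the null space of `s`. -/
lemma closed_graph (Na Nb : CoupleNorm X) (s : X → ℝ≥0∞) (s0 : s 0 = 0)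
    (sadd : ∀ x y, s (x + y) ≤ s x + s y)
    (ssmul : ∀ (c : ℝ) x, s (c • x) ≤ ENNReal.ofReal |c| * s x)
    (sa : ∀ x, s x ≤ Na.N x) (sb : ∀ x, s x ≤ Nb.N x) (P : X →ₗ[ℝ] X) (c : ℝ)
    (hP : ∀ b, Na.N b < ∞ → Nb.N (P b) < ∞)
    (hc : ∀ b, Na.N (P b) ≤ ENNReal.ofReal c * Na.N b) :
    ∃ D : ℝ, 0 ≤ D ∧ ∀ b, Na.N b < ∞ → ∀ δ : ℝ, 0 < δ →
      ∃ n, s n = 0 ∧ Nb.N (P b - n) ≤ ENNReal.ofReal D * Na.N b + ENNReal.ofReal δ := by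
  have sneg : ∀ x, s (-x) ≤ s x := fun x => by simpa using ssmul (-1) x
  let Z : Submodule ℝ (fin Nb) :=
    { carrier := {x | s x = 0}
      add_mem' := fun {a b} ha hb => by
        simp only [Set.mem_ofPred_eq] at *
        have := sadd a b
        rw [ha, hb] at this
        simpa using this
      zero_mem' := by simpa using s0
      smul_mem' := fun c x hx => by
        simp only [Set.mem_ofPred_eq] at *
        have := ssmul c x
        rw [hx] at this
        simpa using this }
  have hZmem : ∀ x : fin Nb, x ∈ Z ↔ s x = 0 := fun x => Iff.rfl
  have hZc : IsClosed (Z : Set (fin Nb)) := by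
    refine IsSeqClosed.isClosed fun u x hu hx => ?_
    rw [tendsto_iff_edist_tendsto_0] at hx
    have : ∀ n, s x ≤ edist (u n) x := fun n => by
      have h1 : s (u n) = 0 := hu n
      have h2 := sadd (u n) (-((u n : X) - x))
      rw [h1, zero_add] at h2
      rw [fin_edist]
      have e : (u n : X) + -((u n : X) - x) = x := by abel
      rw [e] at h2
      exact h2.trans ((sneg _).trans (sb _))
    exact le_antisymm (ge_of_tendsto' hx this) bot_le
  have : IsClosed (Z : Set (fin Nb)) := hZc
  let Q : fin Na →ₗ[ℝ] fin Nb :=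
    LinearMap.codRestrict (fin Nb) (P.comp (fin Na).subtype) (fun b => hP b b.2)
  have hQ : ∀ b, (Q b : X) = P b := fun b => rfl
  let L : fin Na →ₗ[ℝ] (fin Nb ⧸ Z) := Z.mkQ.comp Q
  have hL : Continuous L := by
    refine LinearMap.continuous_of_seq_closed_graph L fun u x y hu hy => ?_
    obtain ⟨y, rfl⟩ := Submodule.mkQ_surjective Z y
    rw [← sub_eq_zero]
    have : Z.mkQ y - L x = Z.mkQ (y - Q x) := by simp [L]
    rw [this]
    simp only [Submodule.mkQ_apply, Submodule.Quotient.mk_eq_zero]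
    rw [hZmem]
    have hx : Tendsto (fun n => ENNReal.ofReal c * edist (u n) x + ENNReal.ofReal ‖L (u n) - Z.mkQ y‖)
        atTop (𝓝 0) := by
      rw [tendsto_iff_edist_tendsto_0] at hu
      have h1 := ENNReal.Tendsto.const_mul (a := ENNReal.ofReal c) hu (Or.inr (by simp))
      have h2 := ENNReal.tendsto_ofReal (tendsto_iff_norm_sub_tendsto_zero.1 hy)
      simpa using h1.add h2
    refine le_antisymm (ge_of_tendsto' hx fun n => ?_) bot_le
    refine ENNReal.le_of_forall_pos_le_add fun δ hδ _ => ?_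
    have e : L (u n) - Z.mkQ y = Z.mkQ (Q (u n) - y) := by simp [L]
    rw [e]
    obtain ⟨m, hm1, hm2⟩ := Submodule.Quotient.norm_mk_lt (S := Z) (Z.mkQ (Q (u n) - y)) (ε := δ) hδ
    have hmz : Q (u n) - y - m ∈ Z := by
      rw [← Submodule.Quotient.mk_eq_zero, Submodule.Quotient.mk_sub, hm1]; simp
    rw [hZmem] at hmz
    have e2 : ((y - Q x : fin Nb) : X) =
        (P (u n - x)) + (-((Q (u n) - y - m : fin Nb) : X) + -(m : X)) := by
      simp [hQ]; abel
    rw [e2]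
    have b1 : s (P (u n - x)) ≤ ENNReal.ofReal c * edist (u n) x := by
      rw [fin_edist]; exact (sa _).trans (hc _)
    have b2 : s (-((Q (u n) - y - m : fin Nb) : X)) ≤ 0 := by rw [← hmz]; exact sneg _
    have b3 : s (-(m : X)) ≤ ENNReal.ofReal ‖Z.mkQ (Q (u n) - y)‖ + δ := by
      refine ((sneg _).trans (sb _)).trans ?_
      rw [← fin_ofReal, ← ENNReal.ofReal_coe_nnreal]
      exact (ENNReal.ofReal_le_ofReal hm2.le).trans ENNReal.ofReal_add_le
    calc _ ≤ _ := sadd _ _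
      _ ≤ _ + (0 + _) := add_le_add b1 ((sadd _ _).trans (add_le_add b2 b3))
      _ = _ := by rw [zero_add, add_assoc]
  let L' : fin Na →L[ℝ] (fin Nb ⧸ Z) := ⟨L, hL⟩
  refine ⟨‖L'‖, L'.opNorm_nonneg, fun b hb δ hδ => ?_⟩
  let b' : fin Na := ⟨b, hb⟩
  obtain ⟨m, hm1, hm2⟩ := Submodule.Quotient.norm_mk_lt (S := Z) (L' b') (ε := δ) hδ
  have hmz : Q b' - m ∈ Z := by
    rw [← Submodule.Quotient.mk_eq_zero, Submodule.Quotient.mk_sub, hm1]; simp [L', L]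
  refine ⟨_, hmz, ?_⟩
  have : P b - ((Q b' - m : fin Nb) : X) = m := by simp [hQ, b']
  rw [this, ← fin_ofReal, show Na.N b = Na.N b' from rfl, ← fin_ofReal,
    ← ENNReal.ofReal_mul L'.opNorm_nonneg, ← ENNReal.ofReal_add (by positivity) hδ.le]
  refine ENNReal.ofReal_le_ofReal (hm2.le.trans ?_)
  gcongr
  exact L'.le_opNorm b'

end basics
end CoupleNorm

namespace CoupleNorm

section part3
variable {X : Type*} [AddCommGroup X] [Module ℝ X]

/-- pseudo-metric from a generalized norm -/
@[reducible] noncomputable def pem (s : X → ℝ≥0∞) (s0 : s 0 = 0)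
    (sadd : ∀ x y, s (x + y) ≤ s x + s y) (sneg : ∀ x, s (-x) = s x) : PseudoEMetricSpace X where
  edist x y := s (x - y)
  edist_self x := by simpa using s0
  edist_comm x y := by
    change s (x - y) = s (y - x)
    rw [← sneg, neg_sub]
  edist_triangle x y z := by
    change s (x - z) ≤ s (x - y) + s (y - z)
    have := sadd (x - y) (y - z)
    simpa using this

lemma partial_sums (N : CoupleNorm X) (y : ℕ → X) (hy : ∀ k, N.N (y k) ≤ 1 / 2 ^ k) :
    ∃ x, Tendsto (fun n => N.N (∑ k ∈ Finset.range n, y k - x)) atTop (𝓝 0) := by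
  have hfin : ∀ k, y k ∈ fin N := fun k => lt_of_le_of_lt (hy k)
    (ENNReal.div_lt_top (by simp) (by simp))
  let f : ℕ → fin N := fun n => ∑ k ∈ Finset.range n, (⟨y k, hfin k⟩ : fin N)
  have hf : ∀ n, ((f n : fin N) : X) = ∑ k ∈ Finset.range n, y k := fun n => by simp [f]
  have hc : CauchySeq f := by
    refine cauchySeq_of_edist_le_geometric_two 1 (by simp) fun n => ?_
    rw [fin_edist, N_sub_comm, hf, hf, Finset.sum_range_succ_sub_sum]
    exact hy n
  obtain ⟨x, hx⟩ := cauchySeq_tendsto_of_complete hc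
  refine ⟨x, ?_⟩
  rw [tendsto_iff_edist_tendsto_0] at hx
  simpa only [fin_edist, hf] using hx

lemma sum_complete (N0 N1 : CoupleNorm X) (u : ℕ → X)
    (hu : ∀ ε : ℝ≥0∞, 0 < ε → ∃ n0, ∀ m, n0 ≤ m → ∀ n, n0 ≤ n → Kfun N0 N1 1 (u m - u n) < ε) :
    ∃ x, Tendsto (fun n => Kfun N0 N1 1 (u n - x)) atTop (𝓝 0) := by
  let _ : PseudoEMetricSpace X := pem (Kfun N0 N1 1) (K_zero _ _ _) (K_add _ _ _) (K_neg _ _ _)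
  have hed : ∀ x y : X, edist x y = Kfun N0 N1 1 (x - y) := fun _ _ => rfl
  have : CompleteSpace X := by
    refine EMetric.complete_of_convergent_controlled_sequences (fun n => 1 / 2 ^ n)
      (fun n => ENNReal.div_pos (by simp) (by simp)) fun u hu => ?_
    have h1 : ∀ k, ∃ y, N0.N y + N1.N (u (k+1) - u k - y) < 1 / 2 ^ k := fun k => by
      have := hu k (k+1) k (by omega) le_rfl
      rw [hed] at this
      unfold Kfun at this
      simpa using iInf_lt_iff.1 this
    choose y hy using h1
    obtain ⟨a, ha⟩ := partial_sums N0 y fun k => le_self_add.trans (hy k).le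
    obtain ⟨b, hb⟩ := partial_sums N1 (fun k => u (k+1) - u k - y k)
      fun k => le_add_self.trans (hy k).le
    refine ⟨u 0 + a + b, ?_⟩
    rw [tendsto_iff_edist_tendsto_0]
    have hab := ha.add hb
    rw [add_zero] at hab
    refine tendsto_of_tendsto_of_tendsto_of_le_of_le tendsto_const_nhds hab
      (fun _ => bot_le) fun n => ?_
    simp only [hed]
    refine (K_le N0 N1 1 _ (∑ k ∈ Finset.range n, y k - a)).trans (le_of_eq ?_)
    rw [ENNReal.ofReal_one, one_mul, Finset.sum_sub_distrib, Finset.sum_range_sub]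
    congr 2
    abel
  have hcs : CauchySeq u := by
    rw [EMetric.cauchySeq_iff]
    exact hu
  obtain ⟨x, hx⟩ := cauchySeq_tendsto_of_complete hcs
  exact ⟨x, tendsto_iff_edist_tendsto_0.1 hx⟩

lemma interp_eq (N0 N1 : CoupleNorm X) (θ : ℝ) (p : ℝ≥0∞) (x : X) :
    interpNorm N0 N1 θ p x = Phi θ p (fun t => Kfun N0 N1 t x) := rfl

lemma interp_add (N0 N1 : CoupleNorm X) (θ : ℝ) {p : ℝ≥0∞} (hp : 1 ≤ p) (x y : X) :
    interpNorm N0 N1 θ p (x + y) ≤ interpNorm N0 N1 θ p x + interpNorm N0 N1 θ p y := by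
  simp only [interp_eq]
  exact (Phi_mono fun t _ => K_add N0 N1 t x y).trans (Phi_add hp (K_meas _ _ _) (K_meas _ _ _))

lemma interp_neg (N0 N1 : CoupleNorm X) (θ : ℝ) (p : ℝ≥0∞) (x : X) :
    interpNorm N0 N1 θ p (-x) = interpNorm N0 N1 θ p x := by
  simp only [interp_eq, K_neg]

lemma interp_zero (N0 N1 : CoupleNorm X) (θ : ℝ) {p : ℝ≥0∞} (hp : 1 ≤ p) :
    interpNorm N0 N1 θ p 0 = 0 := by
  have := Phi_const_mul (θ := θ) hp (f := fun _ => 0) measurable_const 0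
  simp only [interp_eq, K_zero]
  simpa using this

lemma interp_complete (N0 N1 : CoupleNorm X) {θ : ℝ} (h0 : 0 < θ) (h1 : θ < 1) {p : ℝ≥0∞}
    (hp : 1 ≤ p) (u : ℕ → X)
    (hu : ∀ ε : ℝ≥0∞, 0 < ε → ∃ n0, ∀ m, n0 ≤ m → ∀ n, n0 ≤ n →
      interpNorm N0 N1 θ p (u m - u n) < ε) :
    ∃ x, Tendsto (fun n => interpNorm N0 N1 θ p (u n - x)) atTop (𝓝 0) := by
  obtain ⟨x, hx⟩ := sum_complete N0 N1 u (fun ε hε => by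
    obtain ⟨n0, hn0⟩ := hu (ε / 4) (ENNReal.div_pos hε.ne' (by simp))
    refine ⟨n0, fun m hm n hn => ?_⟩
    have hl := Phi_lower h0 h1 hp (K_mono N0 N1 (u m - u n)) zero_lt_one
    refine lt_of_le_of_lt hl ?_
    rw [← interp_eq, Real.one_rpow, mul_one, mul_comm]
    have := ENNReal.mul_lt_of_lt_div (hn0 m hm n hn)
    simpa using this)
  refine ⟨x, ?_⟩
  rw [ENNReal.tendsto_nhds_zero]
  intro ε hε
  obtain ⟨n0, hn0⟩ := hu ε hε
  filter_upwards [eventually_ge_atTop n0] with n hn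
  rw [interp_eq]
  refine Phi_fatou hp (g := fun m t => Kfun N0 N1 t (u n - u m)) (fun m => K_meas _ _ _) ?_ ?_
  · intro t ht
    have hK : Tendsto (fun m => Kfun N0 N1 t (u m - x)) atTop (𝓝 0) := by
      have h2 := ENNReal.Tendsto.const_mul (a := ENNReal.ofReal (max 1 t)) hx (Or.inr (by simp))
      rw [mul_zero] at h2
      exact tendsto_of_tendsto_of_tendsto_of_le_of_le tendsto_const_nhds h2
        (fun _ => bot_le) fun m => K_le_one _ _ _ _
    refine ENNReal.le_of_forall_pos_le_add fun δ hδ _ => ?_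
    rw [← tsub_le_iff_right]
    refine le_liminf_of_le (by isBoundedDefault) ?_
    filter_upwards [ENNReal.tendsto_nhds_zero.1 hK δ (by exact_mod_cast hδ)] with m hm
    rw [tsub_le_iff_right]
    have := K_add N0 N1 t (u n - u m) (u m - x)
    rw [sub_add_sub_cancel] at this
    exact this.trans (add_le_add le_rfl hm)
  · filter_upwards [eventually_ge_atTop n0] with m hm
    exact (hn0 n hn m hm).le

/-- total boundedness implies relative sequential compactness. -/
lemma relcompact_of_tb (N0 N1 : CoupleNorm X) {θ : ℝ} (h0 : 0 < θ) (h1 : θ < 1) {p : ℝ≥0∞}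
    (hp : 1 ≤ p) (S : Set X)
    (hS : ∀ ε : ℝ≥0∞, 0 < ε → ∃ F : Set X, F.Finite ∧
      ∀ x ∈ S, ∃ y ∈ F, interpNorm N0 N1 θ p (x - y) < ε) :
    RelCompactWith (interpNorm N0 N1 θ p) S := by
  let _ : PseudoEMetricSpace X := pem (interpNorm N0 N1 θ p) (interp_zero _ _ _ hp)
    (interp_add _ _ _ hp) (interp_neg _ _ _ _)
  have hed : ∀ x y : X, edist x y = interpNorm N0 N1 θ p (x - y) := fun _ _ => rfl
  have : CompleteSpace X := by
    refine EMetric.complete_of_cauchySeq_tendsto fun u hu => ?_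
    rw [EMetric.cauchySeq_iff] at hu
    obtain ⟨x, hx⟩ := interp_complete N0 N1 h0 h1 hp u hu
    exact ⟨x, tendsto_iff_edist_tendsto_0.2 hx⟩
  have htb : TotallyBounded S := by
    rw [EMetric.totallyBounded_iff]
    intro ε hε
    obtain ⟨F, hF, h⟩ := hS ε hε
    refine ⟨F, hF, fun x hx => ?_⟩
    obtain ⟨y, hy, hxy⟩ := h x hx
    exact Set.mem_iUnion₂.2 ⟨y, hy, hxy⟩
  have hcpt : IsCompact (closure S) :=
    htb.closure.isCompact_of_isClosed isClosed_closure
  intro u hu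
  obtain ⟨x, -, σ, hσ, hx⟩ := hcpt.isSeqCompact (fun n => subset_closure (hu n))
  exact ⟨σ, x, hσ, tendsto_iff_edist_tendsto_0.1 hx⟩

/-- finite nets for `[0,R] • K`. -/
lemma scaled_net (N : CoupleNorm X) (K : Set X) (hKsub : K ⊆ {b | N.N b < ∞})
    (hK : CompactWith N.N K) (R : ℝ) (ε : ℝ≥0∞) (hε : 0 < ε) :
    ∃ F : Set X, F.Finite ∧ ∀ r : ℝ, 0 ≤ r → r ≤ R → ∀ k ∈ K, ∃ y ∈ F, N.N (r • k - y) < ε := by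
  let _ : PseudoEMetricSpace X := pem N.N N.zero N.add_le (N_neg N)
  have hsc : IsSeqCompact {x : X | ∃ r : ℝ, r ∈ Set.Icc 0 R ∧ ∃ k ∈ K, x = r • k} := by
    intro u hu
    choose r hr k hk hu using hu
    obtain ⟨k0, hk0, σ, hσ, h1⟩ := hK k hk
    obtain ⟨r0, hr0, τ, hτ, h2⟩ := (isCompact_Icc (a := (0:ℝ)) (b := R)).isSeqCompact
      (fun n => hr (σ n))
    refine ⟨r0 • k0, ⟨r0, hr0, k0, hk0, rfl⟩, σ ∘ τ, hσ.comp hτ, ?_⟩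
    rw [tendsto_iff_edist_tendsto_0]
    have h3 : Tendsto (fun n => ENNReal.ofReal R * N.N (k (σ (τ n)) - k0) +
        ENNReal.ofReal |r (σ (τ n)) - r0| * N.N k0) atTop (𝓝 0) := by
      have a1 := ENNReal.Tendsto.const_mul (a := ENNReal.ofReal R) (h1.comp hτ.tendsto_atTop)
        (Or.inr (by simp))
      have a2 : Tendsto (fun n => |r (σ (τ n)) - r0|) atTop (𝓝 0) := by
        have := tendsto_iff_norm_sub_tendsto_zero.1 h2
        simpa using this
      have a3 := ENNReal.Tendsto.mul_const (b := N.N k0) (ENNReal.tendsto_ofReal a2)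
        (Or.inr (hKsub hk0).ne)
      simpa using a1.add a3
    refine tendsto_of_tendsto_of_tendsto_of_le_of_le tendsto_const_nhds h3
        (fun _ => bot_le) fun n => ?_
    change N.N (u (σ (τ n)) - r0 • k0) ≤ _
    rw [hu, show r (σ (τ n)) • k (σ (τ n)) - r0 • k0 =
      r (σ (τ n)) • (k (σ (τ n)) - k0) + (r (σ (τ n)) - r0) • k0 by
        rw [smul_sub, sub_smul]; abel]
    refine (N.add_le _ _).trans ?_
    rw [N.smul_eq, N.smul_eq]
    refine add_le_add (mul_le_mul_left (ENNReal.ofReal_le_ofReal ?_) _) le_rfl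
    rw [abs_of_nonneg (hr _).1]; exact (hr _).2
  obtain ⟨F, hF, h⟩ := EMetric.totallyBounded_iff.1 hsc.totallyBounded ε hε
  refine ⟨F, hF, fun r h0 h1 k hk => ?_⟩
  obtain ⟨y, hy, hxy⟩ := Set.mem_iUnion₂.1 (h ⟨r, ⟨h0, h1⟩, k, hk, rfl⟩)
  exact ⟨y, hy, hxy⟩

/-- a regularizing operator is bounded into the interpolation space. -/
lemma P_bound (B0 B1 : CoupleNorm X) {θ : ℝ} (h0 : 0 < θ) (h1 : θ < 1) {p : ℝ≥0∞}
    (hp : 1 ≤ p) (P : X →ₗ[ℝ] X) (c : ℝ)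
    (hP : ∀ b, (B0.N b < ∞ ∨ B1.N b < ∞) → B0.N (P b) < ∞ ∧ B1.N (P b) < ∞)
    (hP0 : ∀ b, B0.N (P b) ≤ ENNReal.ofReal c * B0.N b)
    (hP1 : ∀ b, B1.N (P b) ≤ ENNReal.ofReal c * B1.N b) :
    ∃ D : ℝ≥0∞, D ≠ ∞ ∧ (∀ b, B0.N b < ∞ → interpNorm B0 B1 θ p (P b) ≤ D * B0.N b) ∧
      (∀ b, B1.N b < ∞ → interpNorm B0 B1 θ p (P b) ≤ D * B1.N b) := by
  have s0 : ∀ x, Kfun B0 B1 1 x ≤ B0.N x := K_le0 B0 B1 1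
  have s1 : ∀ x, Kfun B0 B1 1 x ≤ B1.N x := fun x => by simpa using K_le1 B0 B1 1 x
  have null : ∀ n t, Kfun B0 B1 1 n = 0 → Kfun B0 B1 t n = 0 := fun n t hn => by
    have := K_le_one B0 B1 t n
    rw [hn, mul_zero] at this
    exact le_antisymm this bot_le
  have knull : ∀ n t x, Kfun B0 B1 1 n = 0 → Kfun B0 B1 t x ≤ Kfun B0 B1 t (x - n) := by
    intro n t x hn
    have := K_add B0 B1 t (x - n) n
    rwa [null n t hn, add_zero, sub_add_cancel] at this
  obtain ⟨D1, hD1, H1⟩ := closed_graph B1 B0 (Kfun B0 B1 1) (K_zero _ _ _) (K_add _ _ _)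
    (K_smul_le _ _ _) s1 s0 P c (fun b hb => (hP b (Or.inr hb)).1) hP1
  obtain ⟨D0, hD0, H0⟩ := closed_graph B0 B1 (Kfun B0 B1 1) (K_zero _ _ _) (K_add _ _ _)
    (K_smul_le _ _ _) s0 s1 P c (fun b hb => (hP b (Or.inl hb)).2) hP0
  have E1 : ∀ b, B1.N b < ∞ → ∀ t, Kfun B0 B1 t (P b) ≤ ENNReal.ofReal D1 * B1.N b := by
    intro b hb t
    refine ENNReal.le_of_forall_pos_le_add fun δ hδ _ => ?_
    obtain ⟨n, hn, h⟩ := H1 b hb δ hδ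
    rw [ENNReal.ofReal_coe_nnreal] at h
    exact (knull n t _ hn).trans ((K_le0 _ _ _ _).trans h)
  have E0 : ∀ b, B0.N b < ∞ → ∀ t, Kfun B0 B1 t (P b) ≤
      ENNReal.ofReal t * (ENNReal.ofReal D0 * B0.N b) := by
    intro b hb t
    have : ∀ δ : NNReal, 0 < δ → Kfun B0 B1 t (P b) ≤
      ENNReal.ofReal t * (ENNReal.ofReal D0 * B0.N b + δ) := by
      intro δ hδ
      obtain ⟨n, hn, h⟩ := H0 b hb δ hδ
      rw [ENNReal.ofReal_coe_nnreal] at h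
      exact (knull n t _ hn).trans ((K_le1 _ _ _ _).trans (mul_le_mul_right h _))
    have hT : Tendsto (fun δ : NNReal => ENNReal.ofReal t * (ENNReal.ofReal D0 * B0.N b + δ))
        (𝓝[>] 0) (𝓝 (ENNReal.ofReal t * (ENNReal.ofReal D0 * B0.N b + ((0:NNReal) : ℝ≥0∞)))) := by
      refine Tendsto.mono_left ?_ nhdsWithin_le_nhds
      exact ENNReal.Tendsto.const_mul
        (tendsto_const_nhds.add (ENNReal.continuous_coe.tendsto _)) (Or.inr (by simp))
    rw [ENNReal.coe_zero, add_zero] at hT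
    refine ge_of_tendsto hT ?_
    filter_upwards [self_mem_nhdsWithin] with δ hδ
    exact this δ hδ
  set G := ENNReal.ofReal D0 + ENNReal.ofReal D1 + ENNReal.ofReal c with hG
  have g0 : ENNReal.ofReal D0 ≤ G := le_add_right le_self_add
  have g1 : ENNReal.ofReal D1 ≤ G := le_add_right le_add_self
  have gc : ENNReal.ofReal c ≤ G := le_add_self
  have hmm : Measurable fun t : ℝ => ENNReal.ofReal (min 1 t) := by fun_prop
  have fin : ∀ (x : X) (r : ℝ≥0∞), (∀ t, Kfun B0 B1 t x ≤ G * r) →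
      (∀ t, Kfun B0 B1 t x ≤ ENNReal.ofReal t * (G * r)) →
      interpNorm B0 B1 θ p x ≤ G * Phi θ p (fun t => ENNReal.ofReal (min 1 t)) * r := by
    intro x r ha hb
    rw [interp_eq, mul_right_comm]
    refine le_trans (Phi_mono fun t ht => ?_) (Phi_const_mul hp hmm (G * r))
    rcases le_total 1 t with h | h
    · rw [min_eq_left h, ENNReal.ofReal_one, mul_one]; exact ha t
    · rw [min_eq_right h, mul_comm]; exact hb t
  refine ⟨G * Phi θ p (fun t => ENNReal.ofReal (min 1 t)),
    ENNReal.mul_ne_top (by simp [hG]) (Phi_min h0 h1 hp).ne, fun b hb => ?_, fun b hb => ?_⟩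
  · refine fin _ _ (fun t => ?_) (fun t => ?_)
    · exact (K_le0 _ _ _ _).trans ((hP0 b).trans (mul_le_mul_left gc _))
    · exact (E0 b hb t).trans (mul_le_mul_right (mul_le_mul_left g0 _) _)
  · refine fin _ _ (fun t => ?_) (fun t => ?_)
    · exact (E1 b hb t).trans (mul_le_mul_left g1 _)
    · exact (K_le1 _ _ _ _).trans (mul_le_mul_right ((hP1 b).trans (mul_le_mul_left gc _)) _)

end part3
end CoupleNorm

namespace CoupleNorm

lemma approx_est {X Y : Type*} [AddCommGroup X] [Module ℝ X] [AddCommGroup Y] [Module ℝ Y]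
    (A0 A1 : CoupleNorm X) (B0 B1 : CoupleNorm Y)
    (hA : Embeds A0 A1)
    (T : X → Y) (C1 : ℝ) (hC1 : 0 < C1)
    (hT1 : ∀ a a' : X, A1.N a < ∞ → A1.N a' < ∞ →
      B1.N (T a - T a') ≤ ENNReal.ofReal C1 * A1.N (a - a'))
    (K : Set Y)
    (hTK : ∀ a : X, A0.N a < ∞ → ∃ k ∈ K, T a = (A0.N a).toReal • k)
    (P : Y →ₗ[ℝ] Y) (c ε : ℝ) (hc : 0 < c) (hε : 0 < ε)
    (hP1 : ∀ b : Y, B1.N (P b) ≤ ENNReal.ofReal c * B1.N b)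
    (hPK : ∀ b ∈ K, B0.N (P b - b) < ENNReal.ofReal ε)
    (a : X) (ha : A1.N a < ∞) (t : ℝ) (ht : 0 < t) :
    Kfun B0 B1 t (T a - P (T a)) ≤
      ENNReal.ofReal ε * Kfun A0 A1 ((1 + c) * C1 / ε * t) a := by
  conv_rhs => unfold Kfun
  rw [ENNReal.mul_iInf_of_ne (by simpa using hε) (by simp)]
  refine le_iInf fun y => ?_
  by_cases hy : A0.N y = ∞
  · rw [hy, top_add, ENNReal.mul_top (by simpa using hε)]; exact le_top
  have hy1 : A1.N y < ∞ := by
    obtain ⟨d, _, h⟩ := hA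
    exact lt_of_le_of_lt (h y) (ENNReal.mul_lt_top (by simp) (lt_top_iff_ne_top.2 hy))
  refine (K_le B0 B1 t _ (T y - P (T y))).trans ?_
  rw [mul_add]
  refine add_le_add ?_ ?_
  · obtain ⟨k, hk, e⟩ := hTK y (lt_top_iff_ne_top.2 hy)
    rw [N_sub_comm, e, map_smul, ← smul_sub, B0.smul_eq, abs_of_nonneg ENNReal.toReal_nonneg,
      ENNReal.ofReal_toReal hy, mul_comm]
    exact mul_le_mul_left (hPK k hk).le _
  · have e : T a - P (T a) - (T y - P (T y)) = (T a - T y) - P (T a - T y) := by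
      rw [map_sub]; abel
    rw [e]
    calc ENNReal.ofReal t * B1.N ((T a - T y) - P (T a - T y))
        ≤ ENNReal.ofReal t * (ENNReal.ofReal (1 + c) * (ENNReal.ofReal C1 * A1.N (a - y))) := by
          refine mul_le_mul_right ((N_sub_le _ _ _).trans ?_) _
          refine (add_le_add le_rfl (hP1 _)).trans ?_
          rw [ENNReal.ofReal_add (by norm_num) hc.le, ENNReal.ofReal_one, ← one_add_mul]
          exact mul_le_mul_right (hT1 a y ha hy1) _
      _ = _ := by
          rw [← mul_assoc, ← mul_assoc, ← mul_assoc, ← ENNReal.ofReal_mul ht.le,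
            ← ENNReal.ofReal_mul (by positivity), ← ENNReal.ofReal_mul hε.le]
          congr 2
          field_simp

lemma exists_small {α : Type*} {l : Filter α} [l.NeBot] {f : α → ℝ} (hf : Tendsto f l (𝓝 0))
    {r : ℝ≥0∞} (hr : 0 < r) (D : ℝ≥0∞) (hD : D ≠ ∞) :
    ∀ᶠ x in l, D * ENNReal.ofReal (f x) ≤ r := by
  have h := ENNReal.Tendsto.const_mul (a := D) (ENNReal.tendsto_ofReal hf) (Or.inr hD)
  rw [ENNReal.ofReal_zero, mul_zero] at h
  exact ENNReal.tendsto_nhds_zero.1 h r hr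

end CoupleNorm

/-- the main theorem, compact interpolation under condition (H). -/
theorem stmt8 {X Y : Type*} [AddCommGroup X] [Module ℝ X] [AddCommGroup Y] [Module ℝ Y]
    (A0 A1 : CoupleNorm X) (B0 B1 : CoupleNorm Y)
    (hA : CoupleNorm.Embeds A0 A1) (hH : PerssonH B0 B1)
    (T : X → Y) (C0 C1 : ℝ) (hC0 : 0 < C0) (hC1 : 0 < C1)
    (hT0 : ∀ a : X, B0.N (T a) ≤ ENNReal.ofReal C0 * A0.N a)
    (hT1 : ∀ a a' : X, A1.N a < ∞ → A1.N a' < ∞ →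
      B1.N (T a - T a') ≤ ENNReal.ofReal C1 * A1.N (a - a'))
    (K : Set Y) (hKsub : K ⊆ {b | B0.N b < ∞}) (hKcpt : CoupleNorm.CompactWith B0.N K)
    (hTK : ∀ a : X, A0.N a < ∞ → ∃ k ∈ K, T a = (A0.N a).toReal • k) :
    ∀ θ : ℝ, 0 < θ → θ < 1 → ∀ p : ℝ≥0∞, 1 ≤ p →
      ∀ M : Set X, CoupleNorm.BddWith (CoupleNorm.interpNorm A0 A1 θ p) M →
        CoupleNorm.RelCompactWith (CoupleNorm.interpNorm B0 B1 θ p) (T '' M) := by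
  classical
  intro θ h0 h1 p hp M hMb
  obtain ⟨R, hM⟩ := hMb
  refine CoupleNorm.relcompact_of_tb B0 B1 h0 h1 hp _ fun e he => ?_
  obtain ⟨r, hr0, hre⟩ := ENNReal.lt_iff_exists_nnreal_btwn.1 he
  have hr3 : (0:ℝ≥0∞) < r / 3 := ENNReal.div_pos hr0.ne' (by simp)
  set R' := |R| + 1 with hR'
  have hRpos : 0 < R' := by positivity
  have hM' : ∀ a ∈ M, CoupleNorm.interpNorm A0 A1 θ p a ≤ ENNReal.ofReal |R| := fun a ha =>
    (hM a ha).trans (ENNReal.ofReal_le_ofReal (le_abs_self R))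
  have hKt : ∀ a ∈ M, ∀ t : ℝ, 0 < t →
      CoupleNorm.Kfun A0 A1 t a < ENNReal.ofReal (4 * t ^ θ * R') := by
    intro a ha t ht
    have ht' : 0 < t ^ θ := Real.rpow_pos_of_pos ht _
    have h := CoupleNorm.Phi_lower h0 h1 hp (CoupleNorm.K_mono A0 A1 a) ht
    rw [← CoupleNorm.interp_eq] at h
    refine lt_of_le_of_lt (h.trans (mul_le_mul_right (hM' a ha) _)) ?_
    rw [← ENNReal.ofReal_mul (by positivity)]
    refine (ENNReal.ofReal_lt_ofReal_iff (by positivity)).2 ?_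
    exact mul_lt_mul_of_pos_left (by simp [hR']) (by positivity)
  have hdec : ∀ a ∈ M, ∀ t : ℝ, 0 < t → ∃ a0, A0.N a0 < ENNReal.ofReal (4 * t ^ θ * R') ∧
      A1.N a0 < ∞ ∧ A1.N (a - a0) ≤ ENNReal.ofReal (4 * t ^ θ * R' / t) := by
    intro a ha t ht
    have h := hKt a ha t ht
    unfold CoupleNorm.Kfun at h
    obtain ⟨a0, h⟩ := iInf_lt_iff.1 h
    have h2 := lt_of_le_of_lt le_self_add h
    refine ⟨a0, h2, ?_, ?_⟩
    · obtain ⟨d, _, hd⟩ := hA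
      exact lt_of_le_of_lt (hd a0) (ENNReal.mul_lt_top (by simp) (h2.trans_le le_top))
    · rw [ENNReal.ofReal_div_of_pos ht, ENNReal.le_div_iff_mul_le (by simp [ht]) (by simp), mul_comm]
      exact le_add_self.trans h.le
  have hA1 : ∀ a ∈ M, A1.N a < ∞ := by
    intro a ha
    obtain ⟨a0, _, h2, h3⟩ := hdec a ha 1 one_pos
    rw [← sub_add_cancel a a0]
    exact lt_of_le_of_lt (A1.add_le _ _)
      (ENNReal.add_lt_top.2 ⟨lt_of_le_of_lt h3 ENNReal.ofReal_lt_top, h2⟩)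
  obtain ⟨c, hc, H⟩ := hH K hKsub hKcpt
  set C' := (1 + c) * C1 with hC'
  have hC'pos : 0 < C' := by positivity
  obtain ⟨ε, hε, hεr⟩ : ∃ ε : ℝ, 0 < ε ∧
      ENNReal.ofReal |R| * ENNReal.ofReal (ε * (C' / ε) ^ θ) ≤ r / 3 := by
    have ht : Tendsto (fun ε : ℝ => ε * (C' / ε) ^ θ) (𝓝[>] 0) (𝓝 0) := by
      have h : Tendsto (fun ε : ℝ => ε ^ (1 - θ) * C' ^ θ) (𝓝[>] 0) (𝓝 0) := by
        have h2 : Tendsto (fun ε : ℝ => ε ^ (1 - θ)) (𝓝[>] 0) (𝓝 0) := by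
          have := (Real.continuousAt_rpow_const 0 (1 - θ) (Or.inr (by linarith))).tendsto
          rw [Real.zero_rpow (by linarith)] at this
          exact this.mono_left nhdsWithin_le_nhds
        simpa using h2.mul_const (C' ^ θ)
      refine h.congr' ?_
      filter_upwards [self_mem_nhdsWithin] with ε hε
      have hε' : 0 < ε := hε
      rw [Real.div_rpow hC'pos.le hε'.le, Real.rpow_sub hε', Real.rpow_one]
      ring
    obtain ⟨ε, h2, h3⟩ := ((CoupleNorm.exists_small ht hr3 (ENNReal.ofReal |R|) (by simp)).and
      self_mem_nhdsWithin).exists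
    exact ⟨ε, h3, h2⟩
  obtain ⟨P, hP, hP0, hP1, hPK⟩ := H ε hε
  obtain ⟨D, hD, hD0, hD1⟩ := CoupleNorm.P_bound B0 B1 h0 h1 hp P c hP hP0 hP1
  obtain ⟨t, ht, htr⟩ : ∃ t : ℝ, 0 < t ∧
      D * ENNReal.ofReal (C1 * (4 * t ^ θ * R' / t)) ≤ r / 3 := by
    have ht : Tendsto (fun t : ℝ => C1 * (4 * t ^ θ * R' / t)) atTop (𝓝 0) := by
      have h := (tendsto_rpow_neg_atTop (y := 1 - θ) (by linarith)).mul_const (C1 * 4 * R')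
      rw [zero_mul] at h
      refine h.congr' ?_
      filter_upwards [eventually_gt_atTop 0] with t ht
      rw [neg_sub, Real.rpow_sub ht, Real.rpow_one]
      ring
    obtain ⟨t, h2, h3⟩ := ((CoupleNorm.exists_small ht hr3 D hD).and
      (eventually_gt_atTop 0)).exists
    exact ⟨t, h3, h2⟩
  obtain ⟨F, hF, hnet⟩ := CoupleNorm.scaled_net B0 K hKsub hKcpt (4 * t ^ θ * R')
    (r / 3 / (D + 1)) (ENNReal.div_pos hr3.ne' (by simp [hD]))
  refine ⟨P '' F, hF.image _, ?_⟩
  rintro _ ⟨a, ha, rfl⟩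
  obtain ⟨a0, ha0, ha01, haa⟩ := hdec a ha t ht
  obtain ⟨k, hk, hTa0⟩ := hTK a0 (ha0.trans_le le_top)
  obtain ⟨f, hf, hfk⟩ := hnet (A0.N a0).toReal ENNReal.toReal_nonneg
    (ENNReal.toReal_le_of_le_ofReal (by positivity) ha0.le) k hk
  rw [← hTa0] at hfk
  refine ⟨P f, ⟨f, hf, rfl⟩, ?_⟩
  have E1 : CoupleNorm.interpNorm B0 B1 θ p (T a - P (T a)) ≤ r / 3 := by
    have hm := CoupleNorm.K_meas A0 A1 a
    have hm2 : Measurable fun t => CoupleNorm.Kfun A0 A1 (C' / ε * t) a :=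
      hm.comp (measurable_const_mul _)
    calc _ ≤ CoupleNorm.Phi θ p
          (fun t => ENNReal.ofReal ε * CoupleNorm.Kfun A0 A1 (C' / ε * t) a) :=
        CoupleNorm.Phi_mono fun t ht => CoupleNorm.approx_est A0 A1 B0 B1 hA T C1 hC1 hT1 K hTK
          P c ε hc hε hP1 hPK a (hA1 a ha) t ht
      _ ≤ ENNReal.ofReal ε * (ENNReal.ofReal (C' / ε) ^ θ * CoupleNorm.interpNorm A0 A1 θ p a) :=
        (CoupleNorm.Phi_const_mul hp hm2 _).trans
          (mul_le_mul_right (CoupleNorm.Phi_scale hp hm (by positivity)) _)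
      _ ≤ ENNReal.ofReal ε * (ENNReal.ofReal (C' / ε) ^ θ * ENNReal.ofReal |R|) :=
        mul_le_mul_right (mul_le_mul_right (hM' a ha) _) _
      _ = ENNReal.ofReal |R| * ENNReal.ofReal (ε * (C' / ε) ^ θ) := by
        rw [ENNReal.ofReal_mul hε.le, ENNReal.ofReal_rpow_of_pos (by positivity)]
        ring
      _ ≤ _ := hεr
  have hB1 : B1.N (T a - T a0) ≤ ENNReal.ofReal (C1 * (4 * t ^ θ * R' / t)) := by
    rw [ENNReal.ofReal_mul hC1.le]
    exact (hT1 a a0 (hA1 a ha) ha01).trans (mul_le_mul_right haa _)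
  have E2 : CoupleNorm.interpNorm B0 B1 θ p (P (T a - T a0)) ≤ r / 3 :=
    (hD1 _ (lt_of_le_of_lt hB1 ENNReal.ofReal_lt_top)).trans
      ((mul_le_mul_right hB1 _).trans htr)
  have E3 : CoupleNorm.interpNorm B0 B1 θ p (P (T a0 - f)) ≤ r / 3 := by
    refine (hD0 _ (hfk.trans_le le_top)).trans ?_
    refine (mul_le_mul' (le_self_add (a := D) (b := 1)) hfk.le).trans ?_
    exact ENNReal.mul_div_le
  have hsum : T a - P f = (T a - P (T a)) + P (T a - T a0) + P (T a0 - f) := by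
    simp only [map_sub]; abel
  rw [hsum]
  refine lt_of_le_of_lt ?_ hre
  calc _ ≤ _ := CoupleNorm.interp_add B0 B1 θ hp _ _
    _ ≤ _ := add_le_add ((CoupleNorm.interp_add B0 B1 θ hp _ _).trans (add_le_add E1 E2)) E3
    _ = r := ENNReal.add_thirds _
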